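/- Let n, k, ℓ be positive integers with ℓ ≤ k. Suppose Π : {0,1}^{n×k} → ℝ is a finite linear combination Π = Σ_j a_j χ_j of ℓ-cylinder intersections with real coefficients a_j, such that |Π(X)| ≤ 1 and |F_{n,k}(X) − Π(X)| ≤ 1/3 for every X ∈ {0,1}^{n×k}. Then Σ_j |a_j| ≥ (1/6)·exp(n/4^ℓ). -/

import Mathlib

open Finset

/-- `χ` is an `S`-cylinder intersection on `{0,1}^{n×k}`: a product over `j ∈ S` of
`{0,1}`-valued functions `φ j`, where `φ j` does not depend on the `j`-th column. -/
def IsCylinderOn (n k : ℕ) (S : Finset (Fin k))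
    (χ : (Fin n → Fin k → Bool) → ℝ) : Prop :=
  ∃ φ : Fin k → ((Fin n → Fin k → Bool) → ℝ),
    (∀ j ∈ S, ∀ X, φ j X = 0 ∨ φ j X = 1) ∧
    (∀ j ∈ S, ∀ X Y, (∀ i, ∀ j', j' ≠ j → X i j' = Y i j') → φ j X = φ j Y) ∧
    (∀ X, χ X = ∏ j ∈ S, φ j X)

/-- The XOR `X_{i,1} ⊕ ⋯ ⊕ X_{i,k}` of the entries of row `i`, as `0` or `1`. -/
def rowXor {k : ℕ} (u : Fin k → Bool) : ℕ :=
  (Finset.univ.filter (fun j => u j = true)).card % 2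

/-- `F_{n,k}(X) = MOD₃(⊕_j X_{1,j}, …, ⊕_j X_{n,j})`: true iff
`Σ_i (X_{i,1} ⊕ ⋯ ⊕ X_{i,k}) ≡ 0 (mod 3)`. -/
def Fmod (n k : ℕ) (X : Fin n → Fin k → Bool) : Bool :=
  decide ((∑ i, rowXor (X i)) % 3 = 0)

/-!
Let `ω` be a primitive cube root of unity. Up to a constant, `ω ^ ∑ i, rowXor (X i)` is the product
over the rows of `ω ^ s`, where `s = ±1` is the parity of the row as a sign. Flipping bits in one
column changes the signs of the flipped rows, and `ω ^ (-s) / ω ^ s = ω ^ s`, so the discrete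
derivative of this product in a column is the same product over the flipped rows only. A
Cauchy–Schwarz step in the column `j` removes the factor of a cylinder intersection that does not
depend on column `j`, and averages over the flipped rows. If the squared correlation over a set of
`m` rows is at most `c ^ m`, the average over a random subset replaces `c` by `(1 + c) / 2`. The
last column gives `c = 1 / 4`, hence `s` columns give `c = 1 - (3 / 2) / 2 ^ s`, and the
correlation with an `ℓ`-cylinder intersection is at most `exp (-(3 / 2) * n / 4 ^ ℓ)`.

Pairing the approximating combination with the real part of the character, which has constant
correlation with `F`, bounds the weight below by a constant times `exp ((3 / 2) * n / 4 ^ ℓ)`. The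
spare exponent absorbs the constant, except for small `n / 4 ^ ℓ`, where the trivial bound
`∑ |a j| ≥ |Π(0)| ≥ 2 / 3` is enough.
-/

open Equiv (Perm)
open scoped BigOperators ComplexConjugate

section Expectation

lemma expect_pi_prod {ι α K : Type*} [Fintype ι] [DecidableEq ι] [Fintype α] [Field K]
    [CharZero K] (f : ι → α → K) : 𝔼 x : ι → α, ∏ i, f i (x i) = ∏ i, 𝔼 a, f i a := by
  simp only [Fintype.expect_eq_sum_div_card, prod_div_distrib, Fintype.prod_sum, prod_const,
    card_univ, Fintype.card_fun, Nat.cast_pow]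

lemma expect_prod_apply_mem {ι α K : Type*} [Fintype ι] [DecidableEq ι] [Fintype α] [Nonempty α]
    [Field K] [CharZero K] (A : Finset ι) (f : α → K) :
    𝔼 x : ι → α, ∏ i ∈ A, f (x i) = (𝔼 a, f a) ^ #A := by
  calc 𝔼 x : ι → α, ∏ i ∈ A, f (x i)
      = 𝔼 x : ι → α, ∏ i, if i ∈ A then f (x i) else 1 := by
        simp only [prod_ite_mem, univ_inter]
    _ = ∏ i, 𝔼 a, if i ∈ A then f a else 1 := expect_pi_prod fun i a ↦ if i ∈ A then f a else 1
    _ = ∏ i, if i ∈ A then 𝔼 a, f a else 1 := by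
        congr! 1 with i
        split_ifs
        · rfl
        · exact Fintype.expect_const 1
    _ = (𝔼 a, f a) ^ #A := by simp only [prod_ite_mem, univ_inter, prod_const]

lemma expect_pow_card_ne_one {ι K : Type*} [Fintype ι] [DecidableEq ι] [Field K] [CharZero K]
    (A : Finset ι) (c : K) :
    𝔼 h : ι → Perm Bool, c ^ #{i ∈ A | h i ≠ 1} = ((1 + c) / 2) ^ #A := by
  have expect_coin : 𝔼 τ : Perm Bool, (if τ ≠ 1 then c else 1) = (1 + c) / 2 := by
    rw [Fintype.expect_eq_sum_div_card, sum_ite]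
    simp [Fintype.card_perm, filter_ne', filter_eq', add_comm]
  rw [← expect_coin, ← expect_prod_apply_mem]
  simp only [← prod_filter, prod_const]

lemma expect_pow_le_expect_pow {α : Type*} [Fintype α] [Nonempty α] {f : α → ℝ}
    (hf : ∀ a, 0 ≤ f a) (m : ℕ) : (𝔼 a, f a) ^ m ≤ 𝔼 a, f a ^ m := by
  have jensen := Real.pow_arith_mean_le_arith_mean_pow univ (fun _ : α ↦ (Fintype.card α : ℝ)⁻¹) f
    (fun _ _ ↦ by positivity) (by simp) (fun a _ ↦ hf a) m
  simpa only [Fintype.expect_eq_sum_div_card, div_eq_inv_mul, mul_sum] using jensen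

end Expectation

section VanDerCorput

variable {H Ω 𝕜 : Type*} [Group H] [Fintype H] [Fintype Ω] [RCLike 𝕜] (σ : H →* Perm Ω)

lemma expect_norm_expect_perm_sq (g : Ω → 𝕜) :
    ((𝔼 x, ‖𝔼 a, g (σ a x)‖ ^ 2 : ℝ) : 𝕜) = 𝔼 a, 𝔼 x, g (σ a x) * conj (g x) := by
  have shift (b : H) : 𝔼 x, 𝔼 a, g (σ a x) * conj (g (σ b x)) =
      𝔼 a, 𝔼 x, g (σ a x) * conj (g x) := by
    rw [expect_comm]
    refine Fintype.expect_equiv (Equiv.mulRight b⁻¹) _ _ fun a ↦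
      Fintype.expect_equiv (σ b) _ _ fun x ↦ ?_
    simp [← Perm.mul_apply, ← map_mul]
  calc ((𝔼 x, ‖𝔼 a, g (σ a x)‖ ^ 2 : ℝ) : 𝕜)
      = 𝔼 x, 𝔼 b, 𝔼 a, g (σ a x) * conj (g (σ b x)) := by
        rw [RCLike.ofReal_expect]
        refine expect_congr rfl fun x _ ↦ ?_
        rw [RCLike.ofReal_pow, ← RCLike.mul_conj, map_expect, expect_mul_expect, expect_comm]
    _ = 𝔼 a, 𝔼 x, g (σ a x) * conj (g x) := by
        rw [expect_comm]
        simp only [shift, Fintype.expect_const]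

lemma norm_expect_mul_sq_le [Nonempty Ω] (g φ : Ω → 𝕜) (hφ : ∀ x, ‖φ x‖ ≤ 1)
    (hφσ : ∀ a x, φ (σ a x) = φ x) :
    ‖𝔼 x, g x * φ x‖ ^ 2 ≤ ‖𝔼 a, 𝔼 x, g (σ a x) * conj (g x)‖ := by
  have symmetrize : 𝔼 x, g x * φ x = 𝔼 x, (𝔼 a, g (σ a x)) * φ x := by
    have shift (a : H) : 𝔼 x, g (σ a x) * φ x = 𝔼 x, g x * φ x :=
      Fintype.expect_equiv (σ a) _ _ fun x ↦ by rw [hφσ]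
    simp only [expect_mul]
    rw [expect_comm]
    simp only [shift, Fintype.expect_const]
  calc ‖𝔼 x, g x * φ x‖ ^ 2
      ≤ (𝔼 x, ‖𝔼 a, g (σ a x)‖) ^ 2 := by
        rw [symmetrize]
        gcongr
        refine (RCLike.norm_expect_le (K := 𝕜)).trans (expect_le_expect fun x _ ↦ ?_)
        rw [norm_mul]
        exact mul_le_of_le_one_right (norm_nonneg _) (hφ x)
    _ ≤ 𝔼 x, ‖𝔼 a, g (σ a x)‖ ^ 2 := expect_pow_le_expect_pow (fun _ ↦ norm_nonneg _) 2
    _ = ‖𝔼 a, 𝔼 x, g (σ a x) * conj (g x)‖ := by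
        rw [← expect_norm_expect_perm_sq, RCLike.norm_ofReal, abs_of_nonneg]
        positivity

end VanDerCorput

section CubeRootOfUnity

variable {ω : ℂ} (hω : IsPrimitiveRoot ω 3)
include hω

lemma conj_primitiveCubeRoot : conj ω = ω⁻¹ :=
  (Complex.inv_eq_conj (hω.norm'_eq_one three_ne_zero)).symm

lemma primitiveCubeRoot_add_inv : ω + ω⁻¹ = -1 := by
  have geom_sum : ∑ i ∈ range 3, ω ^ i = 0 := hω.geom_sum_eq_zero (by norm_num)
  have inv_eq_sq : ω⁻¹ = ω ^ 2 := inv_eq_of_mul_eq_one_right (by rw [← pow_succ', hω.pow_eq_one])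
  rw [inv_eq_sq]
  simp only [sum_range_succ, range_zero, sum_empty] at geom_sum
  linear_combination geom_sum

lemma re_primitiveCubeRoot : ω.re = -1 / 2 := by
  have re_add_conj : (ω + conj ω).re = (-1 : ℂ).re := by
    rw [conj_primitiveCubeRoot hω, primitiveCubeRoot_add_inv hω]
  simp only [Complex.add_re, Complex.conj_re, Complex.neg_re, Complex.one_re] at re_add_conj
  linarith

lemma re_primitiveCubeRoot_pow (m : ℕ) : (ω ^ m).re = if m % 3 = 0 then 1 else -1 / 2 := by
  split_ifs with hm
  · rw [(hω.pow_eq_one_iff_dvd m).2 (Nat.dvd_of_mod_eq_zero hm), Complex.one_re]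
  · have coprime : m.Coprime 3 :=
      ((Nat.Prime.coprime_iff_not_dvd Nat.prime_three).2 (mt Nat.mod_eq_zero_of_dvd hm)).symm
    exact re_primitiveCubeRoot (hω.pow_of_coprime m coprime)

end CubeRootOfUnity

section RowSign

variable {κ : Type*} [Fintype κ]

/-- The parity of a row of bits as a sign: `1` if the XOR of its entries is `0`, and `-1` if it
is `1`. -/
def rowSign (u : κ → Bool) : ℤˣ := ∏ j, if u j then -1 else 1

lemma rowSign_smul (h : κ → Perm Bool) (u : κ → Bool) :
    rowSign (h • u) = (∏ j, Perm.sign (h j)) * rowSign u := by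
  have bit_sign (τ : Perm Bool) (b : Bool) :
      (if τ b then -1 else 1 : ℤˣ) = Perm.sign τ * if b then -1 else 1 := by
    decide +revert
  simp only [rowSign, Pi.smul_apply', Perm.smul_def, bit_sign, prod_mul_distrib]

lemma rowSign_mulSingle_smul [DecidableEq κ] (j : κ) (τ : Perm Bool) (u : κ → Bool) :
    rowSign ((Pi.mulSingle j τ : κ → Perm Bool) • u) = Perm.sign τ * rowSign u := by
  rw [rowSign_smul]
  simp only [Pi.mulSingle_apply, apply_ite Perm.sign, map_one, prod_ite_eq', mem_univ, if_true]

lemma coe_rowSign {k : ℕ} (u : Fin k → Bool) : (rowSign u : ℤ) = (-1) ^ rowXor u := by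
  rw [rowSign, prod_ite, prod_const_one, mul_one, prod_const, rowXor, Units.val_pow_eq_pow_val,
    Units.val_neg, Units.val_one, ← neg_one_pow_eq_pow_mod_two]

lemma expect_zpow_rowSign [DecidableEq κ] [Nonempty κ] {ω : ℂ} (hω : IsPrimitiveRoot ω 3) :
    𝔼 u : κ → Bool, ω ^ (rowSign u : ℤ) = -1 / 2 := by
  obtain ⟨j⟩ := ‹Nonempty κ›
  let flip : κ → Perm Bool := Pi.mulSingle j (Equiv.swap false true)
  have rowSign_flip (u : κ → Bool) : rowSign (flip • u) = -rowSign u := by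
    rw [rowSign_mulSingle_smul, Perm.sign_swap Bool.false_ne_true, neg_one_mul]
  have expect_flip : 𝔼 u : κ → Bool, ω ^ (rowSign u : ℤ) = 𝔼 u : κ → Bool, ω ^ (-rowSign u : ℤ) :=
    Fintype.expect_equiv (MulAction.toPerm flip) _ _ fun u ↦ by
      rw [MulAction.toPerm_apply, rowSign_flip, Units.val_neg, neg_neg]
  have zpow_add_zpow_neg (s : ℤˣ) : ω ^ (s : ℤ) + ω ^ (-s : ℤ) = -1 := by
    rcases Int.units_eq_one_or s with rfl | rfl <;>
      simp [← primitiveCubeRoot_add_inv hω, add_comm]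
  have double : 𝔼 u : κ → Bool, ω ^ (rowSign u : ℤ) + 𝔼 u : κ → Bool, ω ^ (rowSign u : ℤ) = -1 := by
    nth_rewrite 2 [expect_flip]
    simp only [← expect_add_distrib, zpow_add_zpow_neg, Fintype.expect_const]
  linear_combination double / 2

end RowSign

section ColumnPerm

variable {ι κ α : Type*} [DecidableEq κ]

/-- The action of a family of permutations `h i` of the alphabet on the `j`-th column of a matrix:
`h i` is applied to the entry in row `i`. For `α = Bool` this shifts the column by a bit vector. -/
def columnPerm (j : κ) : (ι → Perm α) →* Perm (ι → κ → α) :=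
  (MulAction.toPermHom (ι → κ → Perm α) (ι → κ → α)).comp
    ((MonoidHom.mulSingle (fun _ : κ ↦ Perm α) j).compLeft ι)

lemma columnPerm_apply (j : κ) (h : ι → Perm α) (X : ι → κ → α) (i : ι) :
    columnPerm j h X i = (Pi.mulSingle j (h i) : κ → Perm α) • X i :=
  rfl

lemma columnPerm_apply_of_ne {j j' : κ} (hj : j' ≠ j) (h : ι → Perm α) (X : ι → κ → α) (i : ι) :
    columnPerm j h X i j' = X i j' := by
  rw [columnPerm_apply, Pi.smul_apply', Pi.mulSingle_eq_of_ne hj, one_smul]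

lemma columnPerm_comm {j j' : κ} (hj : j ≠ j') (h h' : ι → Perm α) (X : ι → κ → α) :
    columnPerm j h (columnPerm j' h' X) = columnPerm j' h' (columnPerm j h X) := by
  ext1 i
  simp only [columnPerm_apply, smul_smul]
  rw [(Pi.mulSingle_commute (f := fun _ : κ ↦ Perm α) hj (h i) (h' i)).eq]

end ColumnPerm

section Phase

variable {ι κ : Type*} [Fintype κ] {ω : ℂ} (hω : IsPrimitiveRoot ω 3)

/-- The product over the rows in `A` of `ω` to the power of the sign of the row. -/
noncomputable def phase (ω : ℂ) (A : Finset ι) (X : ι → κ → Bool) : ℂ :=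
  ∏ i ∈ A, ω ^ (rowSign (X i) : ℤ)

include hω

lemma phase_columnPerm_mul_conj [DecidableEq κ] (j : κ) (h : ι → Perm Bool) (A : Finset ι)
    (X : ι → κ → Bool) :
    phase ω A (columnPerm j h X) * conj (phase ω A X) = phase ω {i ∈ A | h i ≠ 1} X := by
  have flip_sign (s : ℤˣ) : ω ^ (-s : ℤ) * (ω ^ (s : ℤ))⁻¹ = ω ^ (s : ℤ) := by
    have zpow_three_mul : ω ^ (3 * (s : ℤ)) = 1 := by
      rw [zpow_mul, zpow_ofNat, hω.pow_eq_one, one_zpow]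
    have hω0 : ω ≠ 0 := hω.ne_zero three_ne_zero
    rw [← zpow_neg, ← zpow_add₀ hω0, ← mul_one (ω ^ _), ← zpow_three_mul, ← zpow_add₀ hω0]
    congr 1
    ring
  have row (τ : Perm Bool) (s : ℤˣ) :
      ω ^ ((Perm.sign τ * s : ℤˣ) : ℤ) * conj (ω ^ (s : ℤ)) =
        if τ ≠ 1 then ω ^ (s : ℤ) else 1 := by
    rw [map_zpow₀, conj_primitiveCubeRoot hω, inv_zpow]
    split_ifs with hτ
    · have sign_eq : Perm.sign τ = -1 := by decide +revert
      rw [sign_eq, neg_one_mul, Units.val_neg, flip_sign]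
    · rw [not_ne_iff.1 hτ, map_one, one_mul,
        mul_inv_cancel₀ (zpow_ne_zero _ (hω.ne_zero three_ne_zero))]
  simp only [phase, columnPerm_apply, rowSign_mulSingle_smul, map_prod, ← prod_mul_distrib, row,
    prod_filter]

lemma expect_phase [Fintype ι] [DecidableEq ι] [DecidableEq κ] [Nonempty κ] (A : Finset ι) :
    𝔼 X : ι → κ → Bool, phase ω A X = (-1 / 2) ^ #A := by
  rw [← expect_zpow_rowSign (κ := κ) hω]
  exact expect_prod_apply_mem A fun u : κ → Bool ↦ ω ^ (rowSign u : ℤ)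

section Correlation

variable [Fintype ι] [DecidableEq ι] [DecidableEq κ]

lemma norm_expect_phase_mul_mul_pow_le (j : κ) (A : Finset ι) (ψ φ : (ι → κ → Bool) → ℂ)
    (hφ : ∀ X, ‖φ X‖ ≤ 1) (hφj : ∀ h X, φ (columnPerm j h X) = φ X) (m : ℕ) :
    ‖𝔼 X, phase ω A X * ψ X * φ X‖ ^ (2 * m) ≤
      𝔼 h : ι → Perm Bool,
        ‖𝔼 X, phase ω {i ∈ A | h i ≠ 1} X * (ψ (columnPerm j h X) * conj (ψ X))‖ ^ m := by
  have vdc := norm_expect_mul_sq_le (columnPerm j) (fun X ↦ phase ω A X * ψ X) φ hφ hφj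
  simp only [map_mul, mul_mul_mul_comm, phase_columnPerm_mul_conj hω] at vdc
  rw [pow_mul]
  calc (‖𝔼 X, phase ω A X * ψ X * φ X‖ ^ 2) ^ m
      ≤ (𝔼 h : ι → Perm Bool,
          ‖𝔼 X, phase ω {i ∈ A | h i ≠ 1} X * (ψ (columnPerm j h X) * conj (ψ X))‖) ^ m := by
        gcongr
        exact vdc.trans (RCLike.norm_expect_le (K := ℂ))
    _ ≤ _ := expect_pow_le_expect_pow (fun _ ↦ norm_nonneg _) m

variable [Nonempty κ]

lemma norm_expect_phase_mul_sq_le (j : κ) (A : Finset ι) (φ : (ι → κ → Bool) → ℂ)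
    (hφ : ∀ X, ‖φ X‖ ≤ 1) (hφj : ∀ h X, φ (columnPerm j h X) = φ X) :
    ‖𝔼 X, phase ω A X * φ X‖ ^ 2 ≤ (1 / 4) ^ #A := by
  have vdc := norm_expect_mul_sq_le (columnPerm j) (phase ω A) φ hφ hφj
  simp only [phase_columnPerm_mul_conj hω, expect_phase hω, expect_pow_card_ne_one, norm_pow]
    at vdc
  norm_num at vdc ⊢
  exact vdc

lemma norm_expect_phase_mul_prod_pow_le {S : Finset κ} (hS : S.Nonempty) (A : Finset ι)
    (φ : κ → (ι → κ → Bool) → ℂ) (hφ : ∀ j ∈ S, ∀ X, ‖φ j X‖ ≤ 1)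
    (hφj : ∀ j ∈ S, ∀ h X, φ j (columnPerm j h X) = φ j X) :
    ‖𝔼 X, phase ω A X * ∏ j ∈ S, φ j X‖ ^ 2 ^ #S ≤ (1 - 3 / 2 / 2 ^ #S : ℝ) ^ #A := by
  induction hS using Finset.Nonempty.cons_induction generalizing A φ with
  | singleton j =>
    have base := norm_expect_phase_mul_sq_le hω j A (φ j) (hφ j (mem_singleton_self j))
      (hφj j (mem_singleton_self j))
    norm_num at base ⊢
    exact base
  | cons j S hj _ ih =>
    rw [forall_mem_cons] at hφ hφj
    let dφ (h : ι → Perm Bool) (j' : κ) (X : ι → κ → Bool) : ℂ :=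
      φ j' (columnPerm j h X) * conj (φ j' X)
    have ih_derivative (h : ι → Perm Bool) :
        ‖𝔼 X, phase ω {i ∈ A | h i ≠ 1} X * ∏ j' ∈ S, dφ h j' X‖ ^ 2 ^ #S ≤
          (1 - 3 / 2 / 2 ^ #S : ℝ) ^ #{i ∈ A | h i ≠ 1} := by
      refine ih _ (dφ h) (fun j' hj' X ↦ ?_) (fun j' hj' h' X ↦ ?_)
      · rw [norm_mul, RCLike.norm_conj]
        exact mul_le_one₀ (hφ.2 j' hj' _) (norm_nonneg _) (hφ.2 j' hj' _)
      · have hjj' : j ≠ j' := (ne_of_mem_of_not_mem hj' hj).symm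
        simp only [dφ, columnPerm_comm hjj', hφj.2 j' hj']
    calc ‖𝔼 X, phase ω A X * ∏ j' ∈ cons j S hj, φ j' X‖ ^ 2 ^ #(cons j S hj)
        = ‖𝔼 X, phase ω A X * (∏ j' ∈ S, φ j' X) * φ j X‖ ^ (2 * 2 ^ #S) := by
          simp only [prod_cons, card_cons, pow_succ', mul_assoc, mul_comm (φ j _)]
      _ ≤ 𝔼 h, ‖𝔼 X, phase ω {i ∈ A | h i ≠ 1} X * ∏ j' ∈ S, dφ h j' X‖ ^ 2 ^ #S := by
          simpa only [dφ, prod_mul_distrib, map_prod] using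
            norm_expect_phase_mul_mul_pow_le hω j A (fun X ↦ ∏ j' ∈ S, φ j' X) (φ j) hφ.1 hφj.1 _
      _ ≤ 𝔼 h : ι → Perm Bool, (1 - 3 / 2 / 2 ^ #S : ℝ) ^ #{i ∈ A | h i ≠ 1} :=
          expect_le_expect fun h _ ↦ ih_derivative h
      _ = (1 - 3 / 2 / 2 ^ #(cons j S hj) : ℝ) ^ #A := by
          rw [expect_pow_card_ne_one, card_cons, pow_succ]
          congr 1
          field_simp
          ring

lemma norm_expect_phase_mul_prod_le_exp {S : Finset κ} (hS : S.Nonempty) (A : Finset ι)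
    (φ : κ → (ι → κ → Bool) → ℂ) (hφ : ∀ j ∈ S, ∀ X, ‖φ j X‖ ≤ 1)
    (hφj : ∀ j ∈ S, ∀ h X, φ j (columnPerm j h X) = φ j X) :
    ‖𝔼 X, phase ω A X * ∏ j ∈ S, φ j X‖ ≤ Real.exp (-(3 / 2 * (#A / 4 ^ #S))) := by
  have two_le : (2 : ℝ) ≤ 2 ^ #S := le_self_pow₀ one_le_two hS.card_ne_zero
  have base_nonneg : (0 : ℝ) ≤ 1 - 3 / 2 / 2 ^ #S := by
    rw [sub_nonneg, div_le_one (by positivity)]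
    linarith
  refine le_of_pow_le_pow_left₀ (n := 2 ^ #S) (by positivity) (by positivity) ?_
  calc ‖𝔼 X, phase ω A X * ∏ j ∈ S, φ j X‖ ^ 2 ^ #S
      ≤ (1 - 3 / 2 / 2 ^ #S : ℝ) ^ #A := norm_expect_phase_mul_prod_pow_le hω hS A φ hφ hφj
    _ ≤ Real.exp (-(3 / 2 / 2 ^ #S)) ^ #A := by
        gcongr
        exact Real.one_sub_le_exp_neg _
    _ = Real.exp (-(3 / 2 * (#A / 4 ^ #S))) ^ 2 ^ #S := by
        have four_pow : (4 : ℝ) ^ #S = 2 ^ #S * 2 ^ #S := by rw [← mul_pow]; norm_num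
        rw [← Real.exp_nat_mul, ← Real.exp_nat_mul, four_pow]
        congr 1
        push_cast
        field_simp

end Correlation

end Phase

namespace IsCylinderOn

variable {n k : ℕ} {S T : Finset (Fin k)} {χ : (Fin n → Fin k → Bool) → ℝ}

lemma mono (hST : S ⊆ T) (hχ : IsCylinderOn n k S χ) : IsCylinderOn n k T χ := by
  obtain ⟨φ, φ_bit, φ_indep, χ_eq⟩ := hχ
  refine ⟨fun j X ↦ if j ∈ S then φ j X else 1, fun j _ X ↦ ?_, fun j _ X Y hXY ↦ ?_, fun X ↦ ?_⟩
  · dsimp only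
    split_ifs with hj
    · exact φ_bit j hj X
    · exact Or.inr rfl
  · dsimp only
    split_ifs with hj
    · exact φ_indep j hj X Y hXY
    · rfl
  · rw [χ_eq, prod_ite_mem, inter_eq_right.2 hST]

lemma abs_le_one (hχ : IsCylinderOn n k S χ) (X : Fin n → Fin k → Bool) : |χ X| ≤ 1 := by
  obtain ⟨φ, φ_bit, -, χ_eq⟩ := hχ
  rw [χ_eq, abs_prod]
  refine prod_le_one (fun _ _ ↦ abs_nonneg _) fun j hj ↦ ?_
  rcases φ_bit j hj X with h | h <;> simp [h]

lemma norm_expect_phase_mul_le {ω : ℂ} (hω : IsPrimitiveRoot ω 3) (hS : S.Nonempty)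
    (hχ : IsCylinderOn n k S χ) :
    ‖𝔼 X, phase ω univ X * χ X‖ ≤ Real.exp (-(3 / 2 * (n / 4 ^ #S))) := by
  have : Nonempty (Fin k) := hS.to_type
  obtain ⟨φ, φ_bit, φ_indep, χ_eq⟩ := hχ
  have φ_norm : ∀ j ∈ S, ∀ X, ‖(φ j X : ℂ)‖ ≤ 1 := fun j hj X ↦ by
    rcases φ_bit j hj X with h | h <;> simp [h]
  have φ_invariant : ∀ j ∈ S, ∀ h X, (φ j (columnPerm j h X) : ℂ) = φ j X := fun j hj h X ↦ by
    rw [φ_indep j hj _ X fun i j' hj' ↦ columnPerm_apply_of_ne hj' h X i]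
  simpa only [χ_eq, Complex.ofReal_prod, card_univ, Fintype.card_fin] using
    norm_expect_phase_mul_prod_le_exp hω hS univ (fun j X ↦ (φ j X : ℂ)) φ_norm φ_invariant

end IsCylinderOn

section ModThree

variable {n k ℓ : ℕ}

/-- The dual witness for the approximation of `Fmod` by cylinder intersections: `Fmod` rescaled to
the real part of the character `ω ^ m` of `ℤ/3`, so that it nearly averages to `0`. -/
noncomputable def modThreeWitness (X : Fin n → Fin k → Bool) : ℝ :=
  if Fmod n k X then 1 else -1 / 2

lemma phase_univ_eq {ω : ℂ} (hω : IsPrimitiveRoot ω 3) (X : Fin n → Fin k → Bool) :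
    phase ω univ X = ω ^ n * ω ^ ∑ i, rowXor (X i) := by
  have row (u : Fin k → Bool) : ω ^ (rowSign u : ℤ) = ω * ω ^ rowXor u := by
    rw [coe_rowSign]
    rcases Nat.mod_two_eq_zero_or_one #{j | u j = true} with h | h <;> rw [rowXor, h]
    · simp
    · rw [pow_one, zpow_neg_one, pow_one]
      exact inv_eq_of_mul_eq_one_right (by rw [← hω.pow_eq_one]; ring)
  simp only [phase, row, prod_mul_distrib, prod_const, card_univ, Fintype.card_fin,
    prod_pow_eq_pow_sum]

lemma abs_expect_modThreeWitness_mul_le {ω : ℂ} (hω : IsPrimitiveRoot ω 3)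
    (f : (Fin n → Fin k → Bool) → ℝ) :
    |𝔼 X, modThreeWitness X * f X| ≤ ‖𝔼 X, phase ω univ X * f X‖ := by
  have witness_eq_re (X : Fin n → Fin k → Bool) :
      modThreeWitness X = (ω ^ ∑ i, rowXor (X i)).re := by
    simp only [modThreeWitness, Fmod, decide_eq_true_eq, re_primitiveCubeRoot_pow hω]
  calc |𝔼 X, modThreeWitness X * f X|
      = |(𝔼 X : Fin n → Fin k → Bool, ω ^ (∑ i, rowXor (X i)) * f X).re| := by
        simp only [witness_eq_re, Complex.re_expect, Complex.re_mul_ofReal]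
    _ ≤ ‖𝔼 X : Fin n → Fin k → Bool, ω ^ (∑ i, rowXor (X i)) * f X‖ := Complex.abs_re_le_norm _
    _ = ‖𝔼 X, phase ω univ X * f X‖ := by
        simp only [phase_univ_eq hω, mul_assoc, ← mul_expect, norm_mul, norm_pow,
          hω.norm'_eq_one three_ne_zero, one_pow, one_mul]

lemma abs_expect_modThreeWitness_le (hk : 0 < k) :
    |𝔼 X : Fin n → Fin k → Bool, modThreeWitness X| ≤ (1 / 2) ^ n := by
  have : Nonempty (Fin k) := ⟨⟨0, hk⟩⟩
  obtain ⟨ω, hω⟩ : ∃ ω : ℂ, IsPrimitiveRoot ω 3 := ⟨_, Complex.isPrimitiveRoot_exp 3 three_ne_zero⟩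
  simpa [expect_phase hω] using
    abs_expect_modThreeWitness_mul_le hω (fun _ : Fin n → Fin k → Bool ↦ 1)

lemma abs_expect_modThreeWitness_mul_cylinder_le (hk : 0 < k) (hℓ : 0 < ℓ) {S : Finset (Fin k)}
    (hS : #S ≤ ℓ) {χ : (Fin n → Fin k → Bool) → ℝ} (hχ : IsCylinderOn n k S χ) :
    |𝔼 X, modThreeWitness X * χ X| ≤ Real.exp (-(3 / 2 * (n / 4 ^ ℓ))) := by
  obtain ⟨T, hST, hT, hTℓ⟩ : ∃ T, S ⊆ T ∧ T.Nonempty ∧ #T ≤ ℓ := by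
    rcases S.eq_empty_or_nonempty with rfl | hne
    · exact ⟨{⟨0, hk⟩}, empty_subset _, singleton_nonempty _, by rwa [card_singleton]⟩
    · exact ⟨S, Subset.rfl, hne, hS⟩
  obtain ⟨ω, hω⟩ : ∃ ω : ℂ, IsPrimitiveRoot ω 3 := ⟨_, Complex.isPrimitiveRoot_exp 3 three_ne_zero⟩
  calc |𝔼 X, modThreeWitness X * χ X|
      ≤ Real.exp (-(3 / 2 * (n / 4 ^ #T))) :=
        (abs_expect_modThreeWitness_mul_le hω χ).trans
          ((hχ.mono hST).norm_expect_phase_mul_le hω hT)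
    _ ≤ Real.exp (-(3 / 2 * (n / 4 ^ ℓ))) := by
        gcongr
        norm_num

lemma le_expect_modThreeWitness_mul (hk : 0 < k) {ε : ℝ} (hε : ε ≤ 2)
    {P : (Fin n → Fin k → Bool) → ℝ}
    (hP : ∀ X, |(if Fmod n k X then (1 : ℝ) else 0) - P X| ≤ ε) :
    (1 - 2 * ε) / 3 - (2 - ε) / 3 * (1 / 2) ^ n ≤ 𝔼 X, modThreeWitness X * P X := by
  -- Affine in the witness, with the coefficients that make it tight at `1` and `-1 / 2`.
  have pointwise (X : Fin n → Fin k → Bool) :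
      (1 - 2 * ε) / 3 + (2 - ε) / 3 * modThreeWitness X ≤ modThreeWitness X * P X := by
    have hPX := abs_le.1 (hP X)
    unfold modThreeWitness
    split_ifs at hPX ⊢ <;> linarith
  calc (1 - 2 * ε) / 3 - (2 - ε) / 3 * (1 / 2) ^ n
      ≤ (1 - 2 * ε) / 3 + (2 - ε) / 3 * 𝔼 X : Fin n → Fin k → Bool, modThreeWitness X := by
        rw [sub_eq_add_neg, ← mul_neg]
        gcongr
        exact (abs_le.1 (abs_expect_modThreeWitness_le hk)).1
    _ = 𝔼 X : Fin n → Fin k → Bool, ((1 - 2 * ε) / 3 + (2 - ε) / 3 * modThreeWitness X) := by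
        rw [expect_add_distrib, Fintype.expect_const, mul_expect]
    _ ≤ 𝔼 X, modThreeWitness X * P X := expect_le_expect fun X _ ↦ pointwise X

end ModThree

section WeightBounds

variable {ι : Type*} {J : Finset ι} {a : ι → ℝ}

lemma sum_mul_le_sum_abs_mul {b : ι → ℝ} {δ : ℝ} (hb : ∀ j ∈ J, |b j| ≤ δ) :
    ∑ j ∈ J, a j * b j ≤ (∑ j ∈ J, |a j|) * δ := by
  rw [sum_mul]
  refine sum_le_sum fun j hj ↦ (le_abs_self _).trans ?_
  rw [abs_mul]
  exact mul_le_mul_of_nonneg_left (hb j hj) (abs_nonneg _)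

variable {n k ℓ : ℕ} {χ : ι → (Fin n → Fin k → Bool) → ℝ} {ε : ℝ}

lemma one_sub_le_sum_abs
    (hχ : ∀ j ∈ J, ∃ S : Finset (Fin k), #S ≤ ℓ ∧ IsCylinderOn n k S (χ j))
    (happ : ∀ X, |(if Fmod n k X then (1 : ℝ) else 0) - ∑ j ∈ J, a j * χ j X| ≤ ε) :
    1 - ε ≤ ∑ j ∈ J, |a j| := by
  have zero_input := happ fun _ _ ↦ false
  rw [if_pos (by simp [Fmod, rowXor])] at zero_input
  have upper : ∑ j ∈ J, a j * χ j (fun _ _ ↦ false) ≤ (∑ j ∈ J, |a j|) * 1 :=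
    sum_mul_le_sum_abs_mul fun j hj ↦ by
      obtain ⟨S, -, hS⟩ := hχ j hj
      exact hS.abs_le_one _
  linarith [(abs_le.1 zero_input).2]

lemma mul_exp_le_sum_abs (hk : 0 < k) (hℓ : 0 < ℓ) (hε : ε ≤ 2)
    (hχ : ∀ j ∈ J, ∃ S : Finset (Fin k), #S ≤ ℓ ∧ IsCylinderOn n k S (χ j))
    (happ : ∀ X, |(if Fmod n k X then (1 : ℝ) else 0) - ∑ j ∈ J, a j * χ j X| ≤ ε) :
    ((1 - 2 * ε) / 3 - (2 - ε) / 3 * (1 / 2) ^ n) * Real.exp (3 / 2 * (n / 4 ^ ℓ)) ≤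
      ∑ j ∈ J, |a j| := by
  rw [← le_div_iff₀ (Real.exp_pos _), div_eq_mul_inv (∑ j ∈ J, |a j|),
    ← Real.exp_neg]
  calc (1 - 2 * ε) / 3 - (2 - ε) / 3 * (1 / 2) ^ n
      ≤ 𝔼 X, modThreeWitness X * ∑ j ∈ J, a j * χ j X := le_expect_modThreeWitness_mul hk hε happ
    _ = ∑ j ∈ J, a j * 𝔼 X, modThreeWitness X * χ j X := by
        simp only [mul_sum, mul_expect, expect_sum_comm, mul_left_comm]
    _ ≤ (∑ j ∈ J, |a j|) * Real.exp (-(3 / 2 * (n / 4 ^ ℓ))) :=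
        sum_mul_le_sum_abs_mul fun j hj ↦ by
          obtain ⟨S, hSℓ, hS⟩ := hχ j hj
          exact abs_expect_modThreeWitness_mul_cylinder_le hk hℓ hSℓ hS

end WeightBounds

theorem stmt_16_general {n k ℓ : ℕ} (hk : 0 < k) (hℓ : 0 < ℓ)
    {ι : Type*} {J : Finset ι} {a : ι → ℝ} {χ : ι → (Fin n → Fin k → Bool) → ℝ}
    (hcyl : ∀ j ∈ J, ∃ S : Finset (Fin k), #S ≤ ℓ ∧ IsCylinderOn n k S (χ j))
    (happ : ∀ X, |(if Fmod n k X then (1 : ℝ) else 0) - ∑ j ∈ J, a j * χ j X| ≤ 1 / 3) :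
    1 / 6 * Real.exp (n / 4 ^ ℓ) ≤ ∑ j ∈ J, |a j| := by
  set t : ℝ := n / 4 ^ ℓ with ht
  rcases le_or_gt (Real.exp t) 4 with small | large
  · linarith [one_sub_le_sum_abs hcyl happ]
  have five_le : 5 ≤ n := by
    by_contra! hn
    have four_le : (4 : ℝ) ≤ 4 ^ ℓ := le_self_pow₀ (by norm_num) hℓ.ne'
    have t_le_one : t ≤ 1 := by
      rw [ht, div_le_one (by positivity)]
      exact four_le.trans' (mod_cast Nat.le_of_lt_succ hn)
    linarith [Real.exp_le_exp.2 t_le_one, Real.exp_one_lt_three]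
  have two_pow_small : (1 / 2 : ℝ) ^ n ≤ (1 / 2) ^ 5 :=
    pow_le_pow_of_le_one (by norm_num) (by norm_num) five_le
  have exp_eq : Real.exp t = Real.exp (t / 2) ^ 2 := by rw [← Real.exp_nat_mul]; ring_nf
  have exp_three_halves : Real.exp (3 / 2 * t) = Real.exp (t / 2) * Real.exp t := by
    rw [← Real.exp_add]; ring_nf
  have two_le : 2 ≤ Real.exp (t / 2) := by nlinarith [Real.exp_pos (t / 2)]
  calc 1 / 6 * Real.exp t
      ≤ 1 / 12 * Real.exp (3 / 2 * t) := by rw [exp_three_halves]; nlinarith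
    _ ≤ ((1 - 2 * (1 / 3)) / 3 - (2 - 1 / 3) / 3 * (1 / 2) ^ n) * Real.exp (3 / 2 * t) := by
        gcongr
        linarith
    _ ≤ ∑ j ∈ J, |a j| := mul_exp_le_sum_abs hk hℓ (by norm_num) hcyl happ

/-- If `Π = Σ_j a_j χ_j` is a linear combination of `ℓ`-cylinder
intersections with `|Π| ≤ 1` and `|F_{n,k} − Π| ≤ 1/3` everywhere, then
`Σ_j |a_j| ≥ (1/6)·exp(n/4^ℓ)`. -/
theorem stmt_16 (n k ℓ : ℕ) (hn : 0 < n) (hℓ : 0 < ℓ) (hℓk : ℓ ≤ k)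
    {ι : Type*} (J : Finset ι) (a : ι → ℝ) (χ : ι → ((Fin n → Fin k → Bool) → ℝ))
    (hcyl : ∀ j ∈ J, ∃ S : Finset (Fin k), S.card ≤ ℓ ∧ IsCylinderOn n k S (χ j))
    (hbnd : ∀ X, |∑ j ∈ J, a j * χ j X| ≤ 1)
    (happ : ∀ X, |(if Fmod n k X then (1 : ℝ) else 0) - ∑ j ∈ J, a j * χ j X| ≤ 1 / 3) :
    (1 / 6 : ℝ) * Real.exp ((n : ℝ) / 4 ^ ℓ) ≤ ∑ j ∈ J, |a j| := by
  exact stmt_16_general (hℓ.trans_le hℓk) hℓ hcyl happ
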